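/- Let U be a squared four-dimensional Bessel process started at 0, τ₁^U := inf{ t ≥ 0 : Ū(t) − U(t) ≥ 1 } with Ū(t) := sup_{s ∈ [0,t]} U(s), and A(t) := ∫₀^t U(s) ds. Then E[ A(τ₁^U) ] = E[ ∫₀^{τ₁^U} U(s) ds ] < ∞. -/

import Mathlib

open MeasureTheory ProbabilityTheory Real Set Filter

noncomputable section

variable {Ω : Type*} [MeasurableSpace Ω]

/-- A standard one-dimensional Brownian motion (indexed by `ℝ`, with the relevant
properties required for nonnegative times): starts at `0`, has continuous paths,
independent increments, and Gaussian increments of variance `t - s`. -/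
structure IsStdBM (P : Measure Ω) (B : ℝ → Ω → ℝ) : Prop where
  measurable : ∀ t : ℝ, Measurable (B t)
  start : ∀ ω, B 0 ω = 0
  cont : ∀ ω, Continuous fun t => B t ω
  indep : ∀ (n : ℕ) (t : Fin (n + 1) → ℝ), (∀ i, 0 ≤ t i) → Monotone t →
    iIndepFun
      (fun (i : Fin n) ω => B (t i.succ) ω - B (t i.castSucc) ω) P
  gauss : ∀ s t : ℝ, 0 ≤ s → s ≤ t →
    P.map (fun ω => B t ω - B s ω) = gaussianReal 0 (Real.toNNReal (t - s))

/-- A standard `d`-dimensional Brownian motion started at `0`: the coordinate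
processes are independent standard one-dimensional Brownian motions. -/
structure IsStdBMVec (d : ℕ) (P : Measure Ω) (B : ℝ → Ω → EuclideanSpace ℝ (Fin d)) : Prop where
  coord : ∀ i : Fin d, IsStdBM P (fun t ω => B t ω i)
  indepCoord : iIndepFun
    (fun (i : Fin d) ω => fun t : ℝ => B t ω i) P

/-- Last zero of `W` in `[0,1]`. -/
def lastZero (W : ℝ → Ω → ℝ) (ω : Ω) : ℝ := sSup {t ∈ Icc (0:ℝ) 1 | W t ω = 0}

/-- `m` is a standard Brownian meander: obtained from a Brownian motion `W` by
`m s = |W (g + s (1 - g))| / √(1 - g)`, where `g` is the last zero of `W` before time `1`. -/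
def IsBrownianMeander (P : Measure Ω) (m : ℝ → Ω → ℝ) : Prop :=
  ∃ W : ℝ → Ω → ℝ, IsStdBM P W ∧
    ∀ ω, ∀ s ∈ Icc (0:ℝ) 1,
      m s ω = |W (lastZero W ω + s * (1 - lastZero W ω)) ω| / Real.sqrt (1 - lastZero W ω)

/-- Running maximum `X̄(t) = sup_{s ∈ [0,t]} X(s)`. -/
def runMax (X : ℝ → Ω → ℝ) (t : ℝ) (ω : Ω) : ℝ := ⨆ s : Icc (0:ℝ) t, X s ω

/-- Maximal drawdown on `[0,T]` : `sup_{s ∈ [0,T]} (X̄(s) - X(s))`. -/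
def maxDDOn (X : ℝ → Ω → ℝ) (T : ℝ) (ω : Ω) : ℝ := ⨆ s : Icc (0:ℝ) T, (runMax X s ω - X s ω)

/-- Drawdown time `τ_λ^X := inf {t ≥ 0 : X̄(t) - X(t) ≥ λ}`. -/
def ddTime (lam : ℝ) (X : ℝ → Ω → ℝ) (ω : Ω) : ℝ :=
  sInf {t | 0 ≤ t ∧ lam ≤ runMax X t ω - X t ω}

/-- Three-dimensional Bessel process built from a 3-dimensional Brownian motion. -/
def bessel3 (β : ℝ → Ω → EuclideanSpace ℝ (Fin 3)) (t : ℝ) (ω : Ω) : ℝ := ‖β t ω‖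

/-- Squared four-dimensional Bessel process built from a 4-dimensional Brownian motion. -/
def sqBessel4 (γ : ℝ → Ω → EuclideanSpace ℝ (Fin 4)) (t : ℝ) (ω : Ω) : ℝ := ‖γ t ω‖ ^ 2

end

open scoped ENNReal

/-!
Over two units of time each coordinate of the Brownian motion has a fixed positive chance of first
moving away from the origin and then part of the way back, so that, wherever the motion starts, its
squared norm drops by `lam` with probability bounded below. As the increments over the blocks
`[2 k, 2 k + 2]` are independent of the past, the drawdown time `τ` has an exponential tail, while
`‖U s‖_{L²}` grows linearly in `s`. By Tonelli and the Cauchy–Schwarz inequality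
`E ∫₀^τ U(s) ds ≤ ∫₀^∞ ‖U s‖_{L²} P(s < τ)^{1/2} ds < ∞`.
-/

open scoped NNReal

section FirstPassage

variable {Ω : Type*} [MeasurableSpace Ω]

lemma measurable_iSup_of_continuous {T : Type*} [TopologicalSpace T]
    [TopologicalSpace.SeparableSpace T] {X : T → Ω → ℝ} (hX : ∀ t, Measurable (X t))
    (hcont : ∀ ω, Continuous fun t => X t ω) : Measurable fun ω => ⨆ t, X t ω := by
  obtain ⟨D, hD, hDense⟩ := TopologicalSpace.exists_countable_dense T
  have : Countable D := hD.to_subtype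
  have hsup (ω : Ω) : ⨆ t : D, X t ω = ⨆ t, X t ω := hDense.ciSup' (hcont ω)
  simpa only [hsup] using Measurable.iSup fun t : D => hX t

lemma measurableSet_exists_mem_Icc_le {Y : ℝ → Ω → ℝ} (hY : ∀ t, Measurable (Y t))
    (hcont : ∀ ω, ContinuousOn (fun t => Y t ω) (Ici 0)) (a s : ℝ) :
    MeasurableSet {ω | ∃ t ∈ Icc 0 s, a ≤ Y t ω} := by
  rcases (Icc 0 s).eq_empty_or_nonempty with hempty | hne
  · simp [hempty]
  have hcontIcc (ω : Ω) : ContinuousOn (fun t => Y t ω) (Icc 0 s) :=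
    (hcont ω).mono Icc_subset_Ici_self
  have hsup : {ω | ∃ t ∈ Icc 0 s, a ≤ Y t ω} = {ω | a ≤ ⨆ t : Icc 0 s, Y t ω} := by
    ext ω
    have := hne.to_subtype
    obtain ⟨m, hm, hmax⟩ := isCompact_Icc.exists_isMaxOn hne (hcontIcc ω)
    have hbdd : BddAbove (range fun t : Icc 0 s => Y t ω) := ⟨Y m ω, by
      rintro _ ⟨t, rfl⟩
      exact hmax t.2⟩
    exact ⟨fun ⟨t, ht, hat⟩ => hat.trans (le_ciSup hbdd ⟨t, ht⟩),
      fun h => ⟨m, hm, h.trans (ciSup_le fun t => hmax t.2)⟩⟩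
  rw [hsup]
  exact measurableSet_le measurable_const
    (measurable_iSup_of_continuous (fun t => hY t) fun ω => (hcontIcc ω).domRestrict)

-- The second alternative is the empty level set, where `sInf ∅ = 0`.
lemma sInf_first_passage_le_iff {f : ℝ → ℝ} (hf : ContinuousOn f (Ici 0)) {a s : ℝ} (hs : 0 ≤ s) :
    sInf {t | 0 ≤ t ∧ a ≤ f t} ≤ s ↔
      (∃ t ∈ Icc 0 s, a ≤ f t) ∨ ¬ ∃ N : ℕ, ∃ t ∈ Icc (0 : ℝ) N, a ≤ f t := by
  have hbdd : BddBelow {t | 0 ≤ t ∧ a ≤ f t} := ⟨0, fun t ht => ht.1⟩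
  have hclosed : IsClosed {t | 0 ≤ t ∧ a ≤ f t} :=
    hf.preimage_isClosed_of_isClosed isClosed_Ici isClosed_Ici
  rcases {t | 0 ≤ t ∧ a ≤ f t}.eq_empty_or_nonempty with hempty | hne
  · have hnone (t : ℝ) (ht : 0 ≤ t) : ¬ a ≤ f t := fun h => hempty.le ⟨ht, h⟩
    rw [hempty, Real.sInf_empty]
    exact iff_of_true hs (Or.inr fun ⟨_, t, ht, h⟩ => hnone t ht.1 h)
  · refine ⟨fun h => Or.inl ?_, ?_⟩
    · have hmem := hclosed.csInf_mem hne hbdd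
      exact ⟨_, ⟨hmem.1, h⟩, hmem.2⟩
    · rintro (⟨t, ht, h⟩ | hnone)
      · exact (csInf_le hbdd ⟨ht.1, h⟩).trans ht.2
      · obtain ⟨t, ht, h⟩ := hne
        exact absurd ⟨⌈t⌉₊, t, ⟨ht, Nat.le_ceil t⟩, h⟩ hnone

lemma measurable_sInf_first_passage {Y : ℝ → Ω → ℝ} (hY : ∀ t, Measurable (Y t))
    (hcont : ∀ ω, ContinuousOn (fun t => Y t ω) (Ici 0)) (a : ℝ) :
    Measurable fun ω => sInf {t | 0 ≤ t ∧ a ≤ Y t ω} := by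
  have hmeas := measurableSet_exists_mem_Icc_le hY hcont a
  refine measurable_of_Iic fun s => ?_
  rcases lt_or_ge s 0 with hs | hs
  · convert MeasurableSet.empty
    exact eq_empty_of_forall_notMem fun ω h =>
      (hs.trans_le (Real.sInf_nonneg fun t ht => ht.1)).not_ge h
  · have hset : (fun ω => sInf {t | 0 ≤ t ∧ a ≤ Y t ω}) ⁻¹' Iic s =
        {ω | ∃ t ∈ Icc 0 s, a ≤ Y t ω} ∪ {ω | ∃ N : ℕ, ∃ t ∈ Icc (0 : ℝ) N, a ≤ Y t ω}ᶜ := by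
      ext ω
      exact sInf_first_passage_le_iff (hcont ω) hs
    rw [hset]
    refine (hmeas s).union (MeasurableSet.compl ?_)
    simpa only [ofPred_exists] using MeasurableSet.iUnion fun N : ℕ => hmeas N

end FirstPassage

section Drawdown

variable {Ω : Type*} {X : ℝ → Ω → ℝ} {ω : Ω}

lemma le_runMax (hX : Continuous fun t => X t ω) {u t : ℝ} (hu : u ∈ Icc 0 t) :
    X u ω ≤ runMax X t ω := by
  have hbdd := (isCompact_Icc (a := (0 : ℝ)) (b := t)).bddAbove_image hX.continuousOn
  rw [image_eq_range] at hbdd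
  exact le_ciSup hbdd ⟨u, hu⟩

lemma continuousOn_runMax (hX : Continuous fun t => X t ω) :
    ContinuousOn (fun t => runMax X t ω) (Ici 0) := by
  have hscale : Continuous fun t => sSup ((fun s => X (t * s) ω) '' Icc 0 1) :=
    isCompact_Icc.continuous_sSup (hX.comp continuous_mul)
  refine hscale.continuousOn.congr fun t ht => ?_
  have hIcc : (fun s => t * s) '' Icc 0 1 = Icc 0 t := by
    rw [image_mul_left_Icc (mem_Ici.1 ht) zero_le_one, mul_zero, mul_one]
  rw [runMax, iSup, ← image_eq_range (fun s => X s ω), ← hIcc, image_image]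

lemma ddTime_nonneg (lam : ℝ) (X : ℝ → Ω → ℝ) (ω : Ω) : 0 ≤ ddTime lam X ω :=
  Real.sInf_nonneg fun _ ht => ht.1

lemma ddTime_le_of_drop (hX : Continuous fun t => X t ω) {lam u v : ℝ} (hu : 0 ≤ u) (huv : u ≤ v)
    (hdrop : lam ≤ X u ω - X v ω) : ddTime lam X ω ≤ v :=
  csInf_le ⟨0, fun _ ht => ht.1⟩
    ⟨hu.trans huv, hdrop.trans (sub_le_sub_right (le_runMax hX ⟨hu, huv⟩) _)⟩

variable [MeasurableSpace Ω]

lemma measurable_runMax (hX : ∀ t, Measurable (X t)) (hcont : ∀ ω, Continuous fun t => X t ω)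
    (t : ℝ) : Measurable (runMax X t) :=
  measurable_iSup_of_continuous (fun s : Icc 0 t => hX s)
    fun ω => (hcont ω).comp continuous_subtype_val

lemma measurable_ddTime (hX : ∀ t, Measurable (X t)) (hcont : ∀ ω, Continuous fun t => X t ω)
    (lam : ℝ) : Measurable (ddTime lam X) :=
  measurable_sInf_first_passage (fun t => (measurable_runMax hX hcont t).sub (hX t))
    (fun ω => (continuousOn_runMax (hcont ω)).sub (hcont ω).continuousOn) lam

end Drawdown

lemma lintegral_Ioi_ofReal_mul_rpow_ofReal_exp_lt_top {b r : ℝ} (hb : 0 < b) (hr : 0 < r)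
    (a : ℝ) :
    ∫⁻ s in Ioi (0 : ℝ), ENNReal.ofReal s * ENNReal.ofReal (rexp (a - b * s)) ^ r < ∞ := by
  have hint : IntegrableOn (fun s : ℝ => s ^ (1 : ℝ) * rexp (-(b * r) * s ^ (1 : ℝ))) (Ioi 0) :=
    integrableOn_rpow_mul_exp_neg_mul_rpow (by norm_num) one_pos (mul_pos hb hr)
  convert (hint.const_mul (rexp (a * r))).lintegral_lt_top using 1
  refine setLIntegral_congr_fun measurableSet_Ioi fun s (hs : 0 < s) => ?_
  rw [ENNReal.ofReal_rpow_of_pos (exp_pos _), ← ENNReal.ofReal_mul hs.le, ← Real.exp_mul,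
    Real.rpow_one, mul_left_comm, ← Real.exp_add]
  ring_nf

section RandomTimeIntegral

variable {Ω E : Type*} [MeasurableSpace Ω] {μ : Measure Ω} [NormedAddCommGroup E]

lemma setLIntegral_enorm_le_eLpNorm_mul_rpow {f : Ω → E} (hf : AEStronglyMeasurable f μ)
    {p : ℝ≥0∞} (hp : 1 ≤ p) (S : Set Ω) :
    ∫⁻ ω in S, ‖f ω‖ₑ ∂μ ≤ eLpNorm f p μ * μ S ^ (1 - 1 / p.toReal) := by
  calc ∫⁻ ω in S, ‖f ω‖ₑ ∂μ = eLpNorm f 1 (μ.restrict S) := eLpNorm_one_eq_lintegral_enorm.symm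
    _ ≤ eLpNorm f p (μ.restrict S) * μ S ^ (1 - 1 / p.toReal) := by
        simpa using eLpNorm_le_eLpNorm_mul_rpow_measure_univ hp hf.restrict
    _ ≤ eLpNorm f p μ * μ S ^ (1 - 1 / p.toReal) := by
        gcongr
        exact Measure.restrict_le_self

variable [SFinite μ] {X : ℝ → Ω → E} {τ : Ω → ℝ}

lemma lintegral_lintegral_Ioo_enorm_le (hX : StronglyMeasurable (Function.uncurry X))
    (hτ : Measurable τ) {p : ℝ≥0∞} (hp : 1 ≤ p) :
    ∫⁻ ω, (∫⁻ s in Ioo 0 (τ ω), ‖X s ω‖ₑ) ∂μ ≤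
      ∫⁻ s in Ioi 0, eLpNorm (X s) p μ * μ {ω | s < τ ω} ^ (1 - 1 / p.toReal) := by
  have hset : MeasurableSet {q : Ω × ℝ | q.2 < τ q.1} :=
    measurableSet_lt measurable_snd (hτ.comp measurable_fst)
  have hmeas : Measurable ({q : Ω × ℝ | q.2 < τ q.1}.indicator fun q => ‖X q.2 q.1‖ₑ) :=
    (hX.comp_measurable measurable_swap).enorm.indicator hset
  calc ∫⁻ ω, (∫⁻ s in Ioo 0 (τ ω), ‖X s ω‖ₑ) ∂μ
      = ∫⁻ ω, (∫⁻ s in Ioi 0,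
          {q : Ω × ℝ | q.2 < τ q.1}.indicator (fun q => ‖X q.2 q.1‖ₑ) (ω, s)) ∂μ := by
        refine lintegral_congr fun ω => ?_
        rw [← Ioi_inter_Iio, inter_comm, ← Measure.restrict_restrict measurableSet_Iio,
          ← lintegral_indicator measurableSet_Iio]
        rfl
    _ = ∫⁻ s in Ioi 0, ∫⁻ ω in {ω | s < τ ω}, ‖X s ω‖ₑ ∂μ := by
        refine (lintegral_lintegral_swap (by exact hmeas.aemeasurable)).trans
          (lintegral_congr fun s => ?_)
        rw [← lintegral_indicator (measurableSet_lt measurable_const hτ)]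
        rfl
    _ ≤ _ := lintegral_mono fun s =>
        setLIntegral_enorm_le_eLpNorm_mul_rpow
          (hX.comp_measurable measurable_prodMk_left).aestronglyMeasurable hp _

variable [NormedSpace ℝ E]

lemma stronglyMeasurable_intervalIntegral_zero (hX : StronglyMeasurable (Function.uncurry X))
    (hτ : Measurable τ) (hτ_nonneg : ∀ ω, 0 ≤ τ ω) :
    StronglyMeasurable fun ω => ∫ s in 0..τ ω, X s ω := by
  have hset : MeasurableSet {q : Ω × ℝ | 0 < q.2 ∧ q.2 ≤ τ q.1} :=
    (measurableSet_lt measurable_const measurable_snd).inter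
      (measurableSet_le measurable_snd (hτ.comp measurable_fst))
  have hintegral : (fun ω => ∫ s in 0..τ ω, X s ω) = fun ω =>
      ∫ s, {q : Ω × ℝ | 0 < q.2 ∧ q.2 ≤ τ q.1}.indicator (fun q => X q.2 q.1) (ω, s) := by
    ext ω
    rw [intervalIntegral.integral_of_le (hτ_nonneg ω), ← integral_indicator measurableSet_Ioc]
    rfl
  rw [hintegral]
  exact ((hX.comp_measurable measurable_swap).indicator hset).integral_prod_right'

lemma integrable_intervalIntegral_of_lintegral_eLpNorm_mul_rpow_ne_top
    (hX : StronglyMeasurable (Function.uncurry X)) (hτ : Measurable τ) (hτ_nonneg : ∀ ω, 0 ≤ τ ω)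
    {p : ℝ≥0∞} (hp : 1 ≤ p)
    (hfin : ∫⁻ s in Ioi 0, eLpNorm (X s) p μ * μ {ω | s < τ ω} ^ (1 - 1 / p.toReal) ≠ ∞) :
    Integrable (fun ω => ∫ s in 0..τ ω, X s ω) μ := by
  refine ⟨(stronglyMeasurable_intervalIntegral_zero hX hτ hτ_nonneg).aestronglyMeasurable, ?_⟩
  have henorm (ω : Ω) : ‖∫ s in 0..τ ω, X s ω‖ₑ ≤ ∫⁻ s in Ioo 0 (τ ω), ‖X s ω‖ₑ := by
    rw [intervalIntegral.integral_of_le (hτ_nonneg ω), integral_Ioc_eq_integral_Ioo]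
    exact enorm_integral_le_lintegral_enorm _
  calc ∫⁻ ω, ‖∫ s in 0..τ ω, X s ω‖ₑ ∂μ
      ≤ ∫⁻ ω, (∫⁻ s in Ioo 0 (τ ω), ‖X s ω‖ₑ) ∂μ := lintegral_mono henorm
    _ ≤ _ := lintegral_lintegral_Ioo_enorm_le hX hτ hp
    _ < ∞ := hfin.lt_top

lemma integrable_intervalIntegral_of_eLpNorm_le_of_measure_lt_le_exp
    (hX : StronglyMeasurable (Function.uncurry X)) (hτ : Measurable τ) (hτ_nonneg : ∀ ω, 0 ≤ τ ω)
    {p K : ℝ≥0∞} (hp : 1 < p) (hK : K ≠ ∞)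
    (hmoment : ∀ s, 0 ≤ s → eLpNorm (X s) p μ ≤ ENNReal.ofReal s * K) {a b : ℝ} (hb : 0 < b)
    (htail : ∀ s, 0 ≤ s → μ {ω | s < τ ω} ≤ ENNReal.ofReal (rexp (a - b * s))) :
    Integrable (fun ω => ∫ s in 0..τ ω, X s ω) μ := by
  have hexponent : 0 < 1 - 1 / p.toReal := by
    rcases eq_or_ne p ∞ with rfl | hp_top
    · simp
    · have hp_toReal : 1 < p.toReal := by
        simpa using (ENNReal.toReal_lt_toReal ENNReal.one_ne_top hp_top).2 hp
      exact sub_pos.2 ((div_lt_one (one_pos.trans hp_toReal)).2 hp_toReal)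
  refine integrable_intervalIntegral_of_lintegral_eLpNorm_mul_rpow_ne_top hX hτ hτ_nonneg hp.le
    (ne_of_lt ?_)
  calc ∫⁻ s in Ioi 0, eLpNorm (X s) p μ * μ {ω | s < τ ω} ^ (1 - 1 / p.toReal)
      ≤ ∫⁻ s in Ioi 0, K *
          (ENNReal.ofReal s * ENNReal.ofReal (rexp (a - b * s)) ^ (1 - 1 / p.toReal)) := by
        refine setLIntegral_mono' measurableSet_Ioi fun s (hs : 0 < s) => ?_
        rw [← mul_assoc, mul_comm K]
        exact mul_le_mul' (hmoment s hs.le)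
          (ENNReal.rpow_le_rpow (htail s hs.le) hexponent.le)
    _ < ∞ := by
        rw [lintegral_const_mul' _ _ hK]
        exact ENNReal.mul_lt_top hK.lt_top
          (lintegral_Ioi_ofReal_mul_rpow_ofReal_exp_lt_top hb hexponent a)

end RandomTimeIntegral

section DeterministicDrop

-- Here `σ` is the sign of `x`, so `g` points away from the origin and `h` back towards it.
lemma abs_le_sq_sub_sq_of_retreat {lam σ x g h : ℝ} (hσ : σ ^ 2 = 1) (hx : 0 ≤ σ * x)
    (hg : σ * g ∈ Ici (1 + |lam|)) (hh : σ * h ∈ Icc (-2) (-1)) :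
    |lam| ≤ (x + g) ^ 2 - (x + g + h) ^ 2 := by
  obtain ⟨hh₁, hh₂⟩ := hh
  have hdiff : (x + g) ^ 2 - (x + g + h) ^ 2 = -(σ * h) * (2 * (σ * (x + g)) + σ * h) := by
    linear_combination (2 * (x + g) * h + h ^ 2) * hσ
  have hy : 1 + |lam| ≤ σ * (x + g) := by
    rw [mul_add]
    linarith [mem_Ici.1 hg]
  rw [hdiff]
  nlinarith [abs_nonneg lam]

lemma le_norm_sq_sub_norm_sq_of_retreat {ι : Type*} [Fintype ι] [Nonempty ι] {lam : ℝ}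
    {σ : ι → ℝ} {x g h : EuclideanSpace ℝ ι} (hσ : ∀ i, σ i ^ 2 = 1) (hx : ∀ i, 0 ≤ σ i * x i)
    (hg : ∀ i, σ i * g i ∈ Ici (1 + |lam|)) (hh : ∀ i, σ i * h i ∈ Icc (-2) (-1)) :
    lam ≤ ‖x + g‖ ^ 2 - ‖x + g + h‖ ^ 2 := by
  have hcoord (i : ι) : |lam| ≤ (x i + g i) ^ 2 - (x i + g i + h i) ^ 2 :=
    abs_le_sq_sub_sq_of_retreat (hσ i) (hx i) (hg i) (hh i)
  have ⟨i₀⟩ := ‹Nonempty ι›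
  calc lam ≤ |lam| := le_abs_self lam
    _ ≤ (x i₀ + g i₀) ^ 2 - (x i₀ + g i₀ + h i₀) ^ 2 := hcoord i₀
    _ ≤ ∑ i, ((x i + g i) ^ 2 - (x i + g i + h i) ^ 2) :=
        Finset.single_le_sum (fun i _ => (abs_nonneg lam).trans (hcoord i)) (Finset.mem_univ i₀)
    _ = ‖x + g‖ ^ 2 - ‖x + g + h‖ ^ 2 := by
        simp only [EuclideanSpace.real_norm_sq_eq, PiLp.add_apply, Finset.sum_sub_distrib]

end DeterministicDrop

section Independence

variable {Ω : Type*} [MeasurableSpace Ω] {μ : Measure Ω}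

lemma indepFun_pi_of_iIndepFun_prodMk {ι α β : Type*} [Finite ι] [MeasurableSpace α]
    [MeasurableSpace β] {X : ι → Ω → α} {Y : ι → Ω → β} (hX : ∀ i, Measurable (X i))
    (hY : ∀ i, Measurable (Y i)) (hindep : iIndepFun (fun i ω => (X i ω, Y i ω)) μ)
    (hXY : ∀ i, IndepFun (X i) (Y i) μ) :
    IndepFun (fun ω i => X i ω) (fun ω i => Y i ω) μ := by
  have := Fintype.ofFinite ι
  have := hindep.isProbabilityMeasure
  have hXpi : μ.map (fun ω i => X i ω) = Measure.pi fun i => μ.map (X i) :=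
    (hindep.comp (fun _ => Prod.fst) fun _ => measurable_fst).map_fun_eq_pi_map
      fun i => (hX i).aemeasurable
  have hYpi : μ.map (fun ω i => Y i ω) = Measure.pi fun i => μ.map (Y i) :=
    (hindep.comp (fun _ => Prod.snd) fun _ => measurable_snd).map_fun_eq_pi_map
      fun i => (hY i).aemeasurable
  have hXYpi : μ.map (fun ω i => (X i ω, Y i ω)) =
      Measure.pi fun i => (μ.map (X i)).prod (μ.map (Y i)) := by
    simp_rw [hindep.map_fun_eq_pi_map fun i => ((hX i).prodMk (hY i)).aemeasurable,
      fun i => (hXY i).map_prod_eq_prod_map_map (hX i).aemeasurable (hY i).aemeasurable]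
  have hXmeas : Measurable fun ω i => X i ω := measurable_pi_lambda _ hX
  have hYmeas : Measurable fun ω i => Y i ω := measurable_pi_lambda _ hY
  rw [indepFun_iff_map_prod_eq_prod_map_map hXmeas.aemeasurable hYmeas.aemeasurable, hXpi, hYpi,
    ← (measurePreserving_arrowProdEquivProdArrow α β ι _ _).map_eq, ← hXYpi,
    Measure.map_map (MeasurableEquiv.measurable _)
      (measurable_pi_lambda _ fun i => (hX i).prodMk (hY i))]
  rfl

lemma measure_inter_le_mul_of_indepFun [IsFiniteMeasure μ] {α β : Type*} [MeasurableSpace α]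
    [MeasurableSpace β] {X : Ω → α} {Y : Ω → β} (hX : Measurable X) (hY : Measurable Y)
    (hXY : IndepFun X Y μ) {A : Set α} (hA : MeasurableSet A) {D : Set (α × β)}
    (hD : MeasurableSet D) {q : ℝ≥0∞} (hq : ∀ x, μ {ω | (x, Y ω) ∈ D} ≤ q) :
    μ (X ⁻¹' A ∩ {ω | (X ω, Y ω) ∈ D}) ≤ q * μ (X ⁻¹' A) := by
  have hAD : MeasurableSet (Prod.fst ⁻¹' A ∩ D) := (measurable_fst hA).inter hD
  have hslice (x : α) :
      μ.map Y (Prod.mk x ⁻¹' (Prod.fst ⁻¹' A ∩ D)) ≤ A.indicator (fun _ => q) x := by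
    by_cases hx : x ∈ A
    · rw [Measure.map_apply hY (measurable_prodMk_left hAD), indicator_of_mem hx]
      exact (measure_mono fun ω hω => hω.2).trans (hq x)
    · have hempty : Prod.mk x ⁻¹' (Prod.fst ⁻¹' A ∩ D) = ∅ :=
        eq_empty_of_forall_notMem fun y hy => hx hy.1
      simp [hempty]
  calc μ (X ⁻¹' A ∩ {ω | (X ω, Y ω) ∈ D})
      = μ.map (fun ω => (X ω, Y ω)) (Prod.fst ⁻¹' A ∩ D) :=
        (Measure.map_apply (hX.prodMk hY) hAD).symm
    _ = ∫⁻ x, μ.map Y (Prod.mk x ⁻¹' (Prod.fst ⁻¹' A ∩ D)) ∂μ.map X := by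
        rw [hXY.map_prod_eq_prod_map_map hX.aemeasurable hY.aemeasurable, Measure.prod_apply hAD]
    _ ≤ ∫⁻ x, A.indicator (fun _ => q) x ∂μ.map X := lintegral_mono hslice
    _ = q * μ (X ⁻¹' A) := by rw [lintegral_indicator_const hA, Measure.map_apply hX hA]

end Independence

section Brownian

variable {Ω : Type*} [MeasurableSpace Ω] {P : Measure Ω}

namespace IsStdBM

variable {B : ℝ → Ω → ℝ}

lemma hasLaw_eval (hB : IsStdBM P B) (t : ℝ≥0) : HasLaw (B t) (gaussianReal 0 t) P where
  aemeasurable := (hB.measurable t).aemeasurable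
  map_eq := by simpa [hB.start] using hB.gauss 0 t le_rfl t.2

lemma hasIndepIncrements (hB : IsStdBM P B) : HasIndepIncrements (fun t : ℝ≥0 => B t) P :=
  fun n t ht => hB.indep n (fun i => t i) (fun i => (t i).2) ht

lemma isPreBrownianReal (hB : IsStdBM P B) : IsPreBrownianReal (fun t : ℝ≥0 => B t) P :=
  hB.hasIndepIncrements.isPreBrownianReal_of_hasLaw hB.hasLaw_eval

lemma map_const_mul_unit_increment (hB : IsStdBM P B) {σ t : ℝ} (hσ : σ ^ 2 = 1) (ht : 0 ≤ t) :
    P.map (fun ω => σ * (B (t + 1) ω - B t ω)) = gaussianReal 0 1 := by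
  have hinc : Measurable fun ω => B (t + 1) ω - B t ω := (hB.measurable _).sub (hB.measurable _)
  have hvar : NNReal.mk (σ ^ 2) (sq_nonneg σ) = 1 := Subtype.ext hσ
  calc P.map (fun ω => σ * (B (t + 1) ω - B t ω))
      = (P.map fun ω => B (t + 1) ω - B t ω).map (σ * ·) :=
        (Measure.map_map (measurable_const_mul σ) hinc).symm
    _ = gaussianReal 0 1 := by
        rw [hB.gauss t (t + 1) ht (by linarith), gaussianReal_map_const_mul]
        simp [hvar]

lemma measure_consecutive_unit_increments (hB : IsStdBM P B) {σ t : ℝ} (hσ : σ ^ 2 = 1)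
    (ht : 0 ≤ t) {S T : Set ℝ} (hS : MeasurableSet S) (hT : MeasurableSet T) :
    P {ω | σ * (B (t + 1) ω - B t ω) ∈ S ∧ σ * (B (t + 1 + 1) ω - B (t + 1) ω) ∈ T} =
      gaussianReal 0 1 S * gaussianReal 0 1 T := by
  have hinc (s : ℝ) : Measurable fun ω => σ * (B (s + 1) ω - B s ω) :=
    ((hB.measurable _).sub (hB.measurable _)).const_mul σ
  have hindep : IndepFun (fun ω => σ * (B (t + 1) ω - B t ω))
      (fun ω => σ * (B (t + 1 + 1) ω - B (t + 1) ω)) P :=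
    (hB.hasIndepIncrements.indepFun_sub_sub (r := ⟨t, ht⟩)
      (s := ⟨t + 1, by linarith⟩) (t := ⟨t + 1 + 1, by linarith⟩)
      (Subtype.mk_le_mk.2 (by linarith)) (Subtype.mk_le_mk.2 (by linarith))).comp
      (measurable_const_mul σ) (measurable_const_mul σ)
  refine (hindep.measure_inter_preimage_eq_mul S T hS hT).trans ?_
  rw [← Measure.map_apply (hinc t) hS, ← Measure.map_apply (hinc (t + 1)) hT,
    hB.map_const_mul_unit_increment hσ ht, hB.map_const_mul_unit_increment hσ (by linarith)]

end IsStdBM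

lemma gaussianReal_ne_zero_of_volume_ne_zero {m : ℝ} {v : ℝ≥0} (hv : v ≠ 0) {S : Set ℝ}
    (hS : volume S ≠ 0) : gaussianReal m v S ≠ 0 :=
  fun h => hS (gaussianReal_absolutelyContinuous' m hv h)

namespace IsStdBMVec

variable {d : ℕ} {γ : ℝ → Ω → EuclideanSpace ℝ (Fin d)}

lemma measurable (hγ : IsStdBMVec d P γ) (t : ℝ) : Measurable (γ t) :=
  (WithLp.measurable_toLp 2 _).comp (measurable_pi_lambda _ fun i => (hγ.coord i).measurable t)

lemma continuous (hγ : IsStdBMVec d P γ) (ω : Ω) : Continuous fun t => γ t ω :=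
  (PiLp.continuous_toLp 2 _).comp (continuous_pi fun i => (hγ.coord i).cont ω)

lemma indepFun_shift (hγ : IsStdBMVec d P γ) (t₀ : ℝ≥0) :
    IndepFun (fun ω (t : Iic t₀) => γ t ω) (fun ω (t : ℝ≥0) => γ (t₀ + t) ω - γ t₀ ω) P := by
  have hpast (i : Fin d) : Measurable fun ω (t : Iic t₀) => γ t ω i :=
    measurable_pi_lambda _ fun t => (hγ.coord i).measurable t
  have hfuture (i : Fin d) : Measurable fun ω (t : ℝ≥0) => γ (t₀ + t) ω i - γ t₀ ω i :=
    measurable_pi_lambda _ fun t => ((hγ.coord i).measurable _).sub ((hγ.coord i).measurable _)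
  have hcoord := indepFun_pi_of_iIndepFun_prodMk hpast hfuture
    (hγ.indepCoord.comp (fun _ w => (fun t : Iic t₀ => w t, fun t : ℝ≥0 => w (t₀ + t) - w t₀))
      fun _ => by fun_prop)
    fun i => by simpa using ((hγ.coord i).isPreBrownianReal.indepFun_shift t₀).symm
  exact hcoord.comp
    (φ := fun (w : Fin d → Iic t₀ → ℝ) (t : Iic t₀) => WithLp.toLp 2 fun i => w i t)
    (ψ := fun (w : Fin d → ℝ≥0 → ℝ) (t : ℝ≥0) => WithLp.toLp 2 fun i => w i t)
    (by fun_prop) (by fun_prop)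

lemma measure_consecutive_unit_increments (hγ : IsStdBMVec d P γ) {σ : Fin d → ℝ}
    (hσ : ∀ i, σ i ^ 2 = 1) {t : ℝ} (ht : 0 ≤ t) {S T : Set ℝ} (hS : MeasurableSet S)
    (hT : MeasurableSet T) :
    P {ω | ∀ i, σ i * (γ (t + 1) ω i - γ t ω i) ∈ S ∧
        σ i * (γ (t + 1 + 1) ω i - γ (t + 1) ω i) ∈ T} =
      (gaussianReal 0 1 S * gaussianReal 0 1 T) ^ d := by
  have hpath (i : Fin d) : MeasurableSet {w : ℝ → ℝ | σ i * (w (t + 1) - w t) ∈ S ∧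
      σ i * (w (t + 1 + 1) - w (t + 1)) ∈ T} :=
    (measurableSet_preimage (by fun_prop) hS).inter (measurableSet_preimage (by fun_prop) hT)
  rw [ofPred_forall]
  refine (hγ.indepCoord.meas_iInter fun i => ⟨_, hpath i, rfl⟩).trans ?_
  simpa using Finset.prod_congr rfl fun i (_ : i ∈ Finset.univ) =>
    (hγ.coord i).measure_consecutive_unit_increments (hσ i) ht hS hT

lemma measure_drop_ge (hγ : IsStdBMVec d P γ) [NeZero d] (lam : ℝ) {t : ℝ} (ht : 0 ≤ t)
    (x : EuclideanSpace ℝ (Fin d)) :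
    (gaussianReal 0 1 (Ici (1 + |lam|)) * gaussianReal 0 1 (Icc (-2) (-1))) ^ d ≤
      P {ω | lam ≤ ‖x + (γ (t + 1) ω - γ t ω)‖ ^ 2 - ‖x + (γ (t + 1 + 1) ω - γ t ω)‖ ^ 2} := by
  obtain ⟨σ, hσ, hx⟩ : ∃ σ : Fin d → ℝ, (∀ i, σ i ^ 2 = 1) ∧ ∀ i, 0 ≤ σ i * x i :=
    ⟨fun i => if 0 ≤ x i then 1 else -1, fun i => by dsimp only; split_ifs <;> norm_num,
      fun i => by dsimp only; split_ifs <;> linarith⟩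
  rw [← hγ.measure_consecutive_unit_increments hσ ht measurableSet_Ici measurableSet_Icc]
  refine measure_mono fun ω hω => ?_
  have hsplit : x + (γ (t + 1 + 1) ω - γ t ω) =
      x + (γ (t + 1) ω - γ t ω) + (γ (t + 1 + 1) ω - γ (t + 1) ω) := by abel
  rw [mem_ofPred_eq, hsplit]
  exact le_norm_sq_sub_norm_sq_of_retreat hσ hx (fun i => (hω i).1) fun i => (hω i).2

lemma exists_measure_drop_lt_le_exp_neg [IsProbabilityMeasure P] (hγ : IsStdBMVec d P γ)
    [NeZero d] (lam : ℝ) :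
    ∃ b > 0, ∀ t : ℝ, 0 ≤ t → ∀ x : EuclideanSpace ℝ (Fin d),
      P {ω | ‖x + (γ (t + 1) ω - γ t ω)‖ ^ 2 - ‖x + (γ (t + 1 + 1) ω - γ t ω)‖ ^ 2 < lam} ≤
        ENNReal.ofReal (rexp (-b)) := by
  set c := (gaussianReal 0 1 (Ici (1 + |lam|)) * gaussianReal 0 1 (Icc (-2) (-1))) ^ d
  have hc_pos : c ≠ 0 := pow_ne_zero _ <| mul_ne_zero
    (gaussianReal_ne_zero_of_volume_ne_zero one_ne_zero (by simp))
    (gaussianReal_ne_zero_of_volume_ne_zero one_ne_zero (by norm_num))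
  have hc_fin : c ≠ ∞ := by finiteness
  refine ⟨c.toReal, ENNReal.toReal_pos hc_pos hc_fin, fun t ht x => ?_⟩
  have hmeas : MeasurableSet
      {ω | lam ≤ ‖x + (γ (t + 1) ω - γ t ω)‖ ^ 2 - ‖x + (γ (t + 1 + 1) ω - γ t ω)‖ ^ 2} := by
    have := hγ.measurable
    exact measurableSet_le measurable_const (by fun_prop)
  calc P {ω | ‖x + (γ (t + 1) ω - γ t ω)‖ ^ 2 - ‖x + (γ (t + 1 + 1) ω - γ t ω)‖ ^ 2 < lam}
      = 1 - P {ω | lam ≤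
          ‖x + (γ (t + 1) ω - γ t ω)‖ ^ 2 - ‖x + (γ (t + 1 + 1) ω - γ t ω)‖ ^ 2} := by
        rw [← prob_compl_eq_one_sub hmeas]
        simp only [compl_ofPred, not_le]
    _ ≤ 1 - c := tsub_le_tsub_left (hγ.measure_drop_ge lam ht x) 1
    _ = ENNReal.ofReal (1 - c.toReal) := by
        rw [ENNReal.ofReal_sub _ ENNReal.toReal_nonneg, ENNReal.ofReal_one,
          ENNReal.ofReal_toReal hc_fin]
    _ ≤ ENNReal.ofReal (rexp (-c.toReal)) :=
        ENNReal.ofReal_le_ofReal (Real.one_sub_le_exp_neg _)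

end IsStdBMVec

end Brownian

/-- The event that `X` makes no drop of size `lam` from time `2 k + 1` to time `2 k + 2`, for any
of the first `n` blocks `[2 k, 2 k + 2]` of length two. On it the first half of each block is left
free for `X` to move to a favourable position before the second half. -/
def noDropOnGrid {Ω : Type*} (lam : ℝ) (X : ℝ → Ω → ℝ) (n : ℕ) : Set Ω :=
  {ω | ∀ k : Fin n, X (2 * (k : ℕ) + 1) ω - X (2 * (k : ℕ) + 1 + 1) ω < lam}

section DrawdownTail

variable {Ω : Type*}

lemma lt_ddTime_subset_noDropOnGrid {X : ℝ → Ω → ℝ} (hX : ∀ ω, Continuous fun t => X t ω) (lam : ℝ)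
    {s : ℝ} {n : ℕ} (hn : 2 * n ≤ s) : {ω | s < ddTime lam X ω} ⊆ noDropOnGrid lam X n := by
  intro ω hω k
  by_contra! hdrop
  have hk : ((k : ℕ) : ℝ) + 1 ≤ n := by exact_mod_cast k.2
  have hτ := ddTime_le_of_drop (hX ω) (by positivity) (by linarith) hdrop
  linarith [mem_ofPred_eq ▸ hω]

variable [MeasurableSpace Ω] {P : Measure Ω} [IsProbabilityMeasure P]

namespace IsStdBMVec

variable {d : ℕ} {γ : ℝ → Ω → EuclideanSpace ℝ (Fin d)}

lemma measure_noDropOnGrid_succ_le (hγ : IsStdBMVec d P γ) {lam : ℝ} {q : ℝ≥0∞}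
    (hq : ∀ t : ℝ, 0 ≤ t → ∀ x : EuclideanSpace ℝ (Fin d),
      P {ω | ‖x + (γ (t + 1) ω - γ t ω)‖ ^ 2 - ‖x + (γ (t + 1 + 1) ω - γ t ω)‖ ^ 2 < lam} ≤ q)
    (n : ℕ) :
    P (noDropOnGrid lam (fun t ω => ‖γ t ω‖ ^ 2) (n + 1)) ≤
      q * P (noDropOnGrid lam (fun t ω => ‖γ t ω‖ ^ 2) n) := by
  set t₀ : ℝ≥0 := 2 * n with ht₀
  have hmem (k : Fin n) : 2 * ((k : ℕ) : ℝ≥0) + 1 + 1 ≤ t₀ := by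
    rw [ht₀]
    exact_mod_cast (by lia : 2 * (k : ℕ) + 1 + 1 ≤ 2 * n)
  let A : Set (Iic t₀ → EuclideanSpace ℝ (Fin d)) :=
    {x | ∀ k : Fin n, ‖x ⟨2 * (k : ℕ) + 1, le_self_add.trans (hmem k)⟩‖ ^ 2 -
      ‖x ⟨2 * (k : ℕ) + 1 + 1, hmem k⟩‖ ^ 2 < lam}
  let D : Set ((Iic t₀ → EuclideanSpace ℝ (Fin d)) × (ℝ≥0 → EuclideanSpace ℝ (Fin d))) :=
    {p | ‖p.1 ⟨t₀, self_mem_Iic⟩ + p.2 1‖ ^ 2 - ‖p.1 ⟨t₀, self_mem_Iic⟩ + p.2 (1 + 1)‖ ^ 2 < lam}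
  have hA : MeasurableSet A := by
    simp only [A, ofPred_forall]
    exact MeasurableSet.iInter fun k => measurableSet_lt (by fun_prop) measurable_const
  have hD : MeasurableSet D := measurableSet_lt (by fun_prop) measurable_const
  have hγ_meas := hγ.measurable
  refine le_trans (measure_mono fun ω hω => ?_)
    (measure_inter_le_mul_of_indepFun (by fun_prop) (by fun_prop) (hγ.indepFun_shift t₀) hA hD
      fun x => by simpa [D, ← add_assoc] using hq t₀ t₀.2 (x ⟨t₀, self_mem_Iic⟩))
  refine ⟨fun k => ?_, ?_⟩
  · simpa using hω k.castSucc
  · simpa [D, t₀, ← add_assoc] using hω (Fin.last n)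

lemma measure_noDropOnGrid_le_pow (hγ : IsStdBMVec d P γ) {lam : ℝ} {q : ℝ≥0∞}
    (hq : ∀ t : ℝ, 0 ≤ t → ∀ x : EuclideanSpace ℝ (Fin d),
      P {ω | ‖x + (γ (t + 1) ω - γ t ω)‖ ^ 2 - ‖x + (γ (t + 1 + 1) ω - γ t ω)‖ ^ 2 < lam} ≤ q)
    (n : ℕ) : P (noDropOnGrid lam (fun t ω => ‖γ t ω‖ ^ 2) n) ≤ q ^ n := by
  induction n with
  | zero => simpa using prob_le_one
  | succ n ih =>
    calc P (noDropOnGrid lam (fun t ω => ‖γ t ω‖ ^ 2) (n + 1))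
        ≤ q * P (noDropOnGrid lam (fun t ω => ‖γ t ω‖ ^ 2) n) :=
          hγ.measure_noDropOnGrid_succ_le hq n
      _ ≤ q ^ (n + 1) := by
          rw [pow_succ']
          gcongr

lemma exists_measure_lt_ddTime_le_exp (hγ : IsStdBMVec d P γ) [NeZero d] (lam : ℝ) :
    ∃ b > 0, ∀ s : ℝ, 0 ≤ s →
      P {ω | s < ddTime lam (fun t ω => ‖γ t ω‖ ^ 2) ω} ≤
        ENNReal.ofReal (rexp (2 * b - b * s)) := by
  obtain ⟨b, hb, hdrop⟩ := hγ.exists_measure_drop_lt_le_exp_neg lam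
  refine ⟨b / 2, half_pos hb, fun s hs => ?_⟩
  have hcont (ω : Ω) : Continuous fun t => ‖γ t ω‖ ^ 2 := (hγ.continuous ω).norm.pow 2
  have hfloor : 2 * (⌊s / 2⌋₊ : ℝ) ≤ s := by linarith [Nat.floor_le (div_nonneg hs zero_le_two)]
  calc P {ω | s < ddTime lam (fun t ω => ‖γ t ω‖ ^ 2) ω}
      ≤ P (noDropOnGrid lam (fun t ω => ‖γ t ω‖ ^ 2) ⌊s / 2⌋₊) :=
        measure_mono (lt_ddTime_subset_noDropOnGrid hcont lam hfloor)
    _ ≤ ENNReal.ofReal (rexp (-b)) ^ ⌊s / 2⌋₊ := hγ.measure_noDropOnGrid_le_pow hdrop _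
    _ = ENNReal.ofReal (rexp (-(b * ⌊s / 2⌋₊))) := by
        rw [← ENNReal.ofReal_pow (exp_pos _).le, ← Real.exp_nat_mul]
        ring_nf
    _ ≤ ENNReal.ofReal (rexp (2 * (b / 2) - b / 2 * s)) := by
        refine ENNReal.ofReal_le_ofReal (Real.exp_le_exp.2 ?_)
        nlinarith [Nat.lt_floor_add_one (s / 2)]

end IsStdBMVec

end DrawdownTail

section Moments

lemma eLpNorm_sq_gaussianReal_lt_top {m : ℝ} {v : ℝ≥0} {p : ℝ≥0∞} (hp : p ≠ ∞) :
    eLpNorm (fun x => x ^ 2) p (gaussianReal m v) < ∞ := by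
  calc eLpNorm (fun x => x ^ 2) p (gaussianReal m v)
      = eLpNorm id (p * ENNReal.ofReal 2) (gaussianReal m v) ^ (2 : ℝ) := by
        rw [← eLpNorm_norm_rpow id two_pos]
        simp only [id, Real.rpow_two, norm_eq_abs, sq_abs]
    _ < ∞ := ENNReal.rpow_lt_top_of_nonneg zero_le_two
        (memLp_id_gaussianReal' _ (ENNReal.mul_ne_top hp ENNReal.ofReal_ne_top)).eLpNorm_ne_top

variable {Ω : Type*} [MeasurableSpace Ω] {P : Measure Ω}

lemma IsStdBM.eLpNorm_sq {B : ℝ → Ω → ℝ} (hB : IsStdBM P B) (p : ℝ≥0∞) {s : ℝ} (hs : 0 ≤ s) :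
    eLpNorm (fun ω => B s ω ^ 2) p P =
      ENNReal.ofReal s * eLpNorm (fun x => x ^ 2) p (gaussianReal 0 1) := by
  have hsq {ν : Measure ℝ} : AEStronglyMeasurable (fun x : ℝ => x ^ 2) ν := by fun_prop
  have hlaw : P.map (B s) = (gaussianReal 0 1).map (√s * ·) := by
    lift s to ℝ≥0 using hs
    rw [(hB.hasLaw_eval s).map_eq, gaussianReal_map_const_mul, mul_zero, mul_one]
    congr 1
    exact Subtype.ext (Real.sq_sqrt s.2).symm
  calc eLpNorm (fun ω => B s ω ^ 2) p P
      = eLpNorm (fun x => x ^ 2) p (P.map (B s)) :=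
        (eLpNorm_map_measure hsq (hB.measurable s).aemeasurable).symm
    _ = eLpNorm (fun x => (√s * x) ^ 2) p (gaussianReal 0 1) := by
        rw [hlaw]
        exact eLpNorm_map_measure hsq (by fun_prop)
    _ = eLpNorm (s • fun x : ℝ => x ^ 2) p (gaussianReal 0 1) := by
        simp only [mul_pow, Real.sq_sqrt hs]
        rfl
    _ = ENNReal.ofReal s * eLpNorm (fun x => x ^ 2) p (gaussianReal 0 1) := by
        rw [eLpNorm_const_smul s, Real.enorm_of_nonneg hs]

lemma IsStdBMVec.eLpNorm_norm_sq_le {d : ℕ} {γ : ℝ → Ω → EuclideanSpace ℝ (Fin d)}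
    (hγ : IsStdBMVec d P γ) {p : ℝ≥0∞} (hp : 1 ≤ p) {s : ℝ} (hs : 0 ≤ s) :
    eLpNorm (fun ω => ‖γ s ω‖ ^ 2) p P ≤
      ENNReal.ofReal s * (d * eLpNorm (fun x => x ^ 2) p (gaussianReal 0 1)) := by
  calc eLpNorm (fun ω => ‖γ s ω‖ ^ 2) p P
      = eLpNorm (∑ i, fun ω => γ s ω i ^ 2) p P := by
        congr 1
        ext ω
        rw [EuclideanSpace.real_norm_sq_eq, Finset.sum_apply]
    _ ≤ ∑ i, eLpNorm (fun ω => γ s ω i ^ 2) p P :=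
        eLpNorm_sum_le
          (fun i _ => (((hγ.coord i).measurable s).pow_const 2).aestronglyMeasurable) hp
    _ = ENNReal.ofReal s * (d * eLpNorm (fun x => x ^ 2) p (gaussianReal 0 1)) := by
        simp only [(hγ.coord _).eLpNorm_sq p hs, Finset.sum_const, Finset.card_univ,
          Fintype.card_fin, nsmul_eq_mul, mul_left_comm]

end Moments

theorem sqBessel4_time_integral_at_drawdown_time_integrable_general {Ω : Type*}
    [MeasurableSpace Ω] (P : Measure Ω) [IsProbabilityMeasure P] {d : ℕ} [NeZero d]
    (γ : ℝ → Ω → EuclideanSpace ℝ (Fin d)) (hγ : IsStdBMVec d P γ) (lam : ℝ) :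
    Integrable (fun ω =>
      ∫ s in (0 : ℝ)..ddTime lam (fun t ω => ‖γ t ω‖ ^ 2) ω, ‖γ s ω‖ ^ 2) P := by
  set U : ℝ → Ω → ℝ := fun t ω => ‖γ t ω‖ ^ 2
  have hU_meas (t : ℝ) : Measurable (U t) := (hγ.measurable t).norm.pow_const 2
  have hU_cont (ω : Ω) : Continuous fun t => U t ω := (hγ.continuous ω).norm.pow 2
  obtain ⟨b, hb, htail⟩ := hγ.exists_measure_lt_ddTime_le_exp lam
  exact integrable_intervalIntegral_of_eLpNorm_le_of_measure_lt_le_exp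
    (stronglyMeasurable_uncurry_of_continuous_of_stronglyMeasurable hU_cont
      fun t => (hU_meas t).stronglyMeasurable)
    (measurable_ddTime hU_meas hU_cont lam) (ddTime_nonneg lam U) ENNReal.one_lt_two
    (ENNReal.mul_ne_top (ENNReal.natCast_ne_top d) (eLpNorm_sq_gaussianReal_lt_top (by simp)).ne)
    (fun _ hs => hγ.eLpNorm_norm_sq_le one_le_two hs) hb htail

/-- with `A(t) := ∫₀^t U(s) ds` for a squared four-dimensional Bessel
process `U` started at `0` and `τ₁` its unit drawdown time,
`E[A(τ₁)] = E[∫₀^{τ₁} U(s) ds] < ∞`, i.e. `A(τ₁)` is integrable. -/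
theorem sqBessel4_time_integral_at_drawdown_time_integrable
    {Ω : Type*} [MeasurableSpace Ω] (P : Measure Ω) [IsProbabilityMeasure P]
    (γ : ℝ → Ω → EuclideanSpace ℝ (Fin 4)) (hγ : IsStdBMVec 4 P γ) :
    Integrable
      (fun ω => ∫ s in (0:ℝ)..(ddTime 1 (sqBessel4 γ) ω), sqBessel4 γ s ω) P :=
  sqBessel4_time_integral_at_drawdown_time_integrable_general P γ hγ 1
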